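/- For all integers g ≥ 1 and d ≥ 1, the number of tuples (π₁, π₂, τ₁, …, τ_{2g−2}) of permutations of {1,…,d} such that π₁π₂π₁⁻¹π₂⁻¹τ₁⋯τ_{2g−2} is the identity and each τ_i is a transposition (with no monotonicity or transitivity constraint) equals d! · Σ_{λ ∈ Y^d} (Σ_{□ ∈ λ} c(□))^{2g−2}, where the inner sum is over the cells of λ and c(□) is the content of the cell. -/

import Mathlib

noncomputable section

/-- The content of the cell in row `i` and column `j` (0-indexed) is `j - i`. -/
def content (c : ℕ × ℕ) : ℤ := (c.2 : ℤ) - (c.1 : ℤ)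

/-!
The equation `π₁ π₂ π₁⁻¹ π₂⁻¹ t = 1` says that left multiplication by `t` carries the conjugate
`π₁ π₂ π₁⁻¹` to `π₂`. Hence the number of factorizations is the trace of `Z Tⁿ` on functions on
`S_d`, where `Z` sums over conjugates and `T` translates by the sum of all transpositions. As `Z` is
`d!` times a projection onto class functions, it remains to find the eigenvalues of `T` on class
functions.

`S_d` acts on the weight spaces of `(R^d)^⊗d`, and the sum of all transpositions acts there, up to
scalars, as the Casimir element of `gl_d`. The characters of the weight spaces of partition weight
are a basis of the class functions. Commuting polarization operators under the trace shows that `T`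
is triangular in this basis when weights are ordered by their sums of squares; the diagonal entries
are the content sums.
-/

namespace CutJoin

section LinearAlgebra

theorem trace_eq_sum_apply_single {R X : Type*} [CommRing R] [Fintype X] [DecidableEq X]
    (T : Module.End R (X → R)) : LinearMap.trace R _ T = ∑ x, T (Pi.single x 1) x := by
  simp only [LinearMap.trace_eq_matrix_trace R (Pi.basisFun R X), Matrix.trace, Matrix.diag_apply,
    LinearMap.toMatrix_apply, Pi.basisFun_apply, Pi.basisFun_repr]

theorem linearIndependent_of_triangular {R ι X α : Type*} [Ring R] [NoZeroDivisors R]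
    [LinearOrder α] (v : ι → X → R) (x : ι → X) (r : ι → α) (hdiag : ∀ i, v i (x i) ≠ 0)
    (htri : ∀ i j, v i (x j) ≠ 0 → i = j ∨ r j < r i) : LinearIndependent R v := by
  classical
  rw [linearIndependent_iff']
  intro s c hc
  by_contra! hne
  obtain ⟨i₀, hi₀, hci₀⟩ := hne
  obtain ⟨k, hk, hmax⟩ := ({i ∈ s | c i ≠ 0} : Finset ι).exists_max_image r
    ⟨i₀, Finset.mem_filter.2 ⟨hi₀, hci₀⟩⟩
  obtain ⟨hks, hck⟩ := Finset.mem_filter.1 hk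
  have hoff : ∀ i ∈ s, i ≠ k → (c i • v i) (x k) = 0 := by
    intro i hi hik
    by_contra hprod
    obtain ⟨hci, hvi⟩ := mul_ne_zero_iff.1 hprod
    exact ((htri i k hvi).resolve_left hik).not_ge (hmax i (Finset.mem_filter.2 ⟨hi, hci⟩))
  have hsum := congrFun hc (x k)
  rw [Finset.sum_apply, Finset.sum_eq_single_of_mem k hks hoff] at hsum
  exact mul_ne_zero hck (hdiag k) hsum

theorem trace_pow_eq_sum_pow_of_triangular {R V ι α : Type*} [CommRing R] [AddCommGroup V]
    [Module R V] [Fintype ι] [Preorder α] (b : Module.Basis ι R V) (c : ι → R) (r : ι → α)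
    (T : Module.End R V)
    (hT : ∀ i, T (b i) - c i • b i ∈ Submodule.span R (b '' {j | r i < r j})) (n : ℕ) :
    LinearMap.trace R V (T ^ n) = ∑ i, c i ^ n := by
  classical
  nontriviality R
  set W : ι → Submodule R V := fun i => Submodule.span R (b '' {j | r i < r j})
  have hTW : ∀ i, W i ≤ (W i).comap T := by
    intro i
    refine Submodule.span_le.2 ?_
    rintro _ ⟨j, hj, rfl⟩
    have hlt : W j ≤ W i :=
      Submodule.span_mono (Set.image_mono fun k (hk : r j < r k) => lt_trans hj hk)
    have hbj : b j ∈ W i := Submodule.subset_span ⟨j, hj, rfl⟩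
    simpa using (W i).add_mem (hlt (hT j)) ((W i).smul_mem (c j) hbj)
  have hpow : ∀ i, (T ^ n) (b i) - c i ^ n • b i ∈ W i := by
    intro i
    induction n with
    | zero => simp
    | succ n ih =>
      have h := (W i).add_mem (hTW i ih) ((W i).smul_mem (c i ^ n) (hT i))
      convert h using 1
      rw [map_sub, map_smul, smul_sub, smul_smul, sub_add_sub_cancel, pow_succ', pow_succ,
        Module.End.mul_apply]
  rw [LinearMap.trace_eq_matrix_trace R b, Matrix.trace]
  refine Finset.sum_congr rfl fun i _ => ?_
  have hcoord : b.repr ((T ^ n) (b i) - c i ^ n • b i) i = 0 := by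
    by_contra h
    exact lt_irrefl (r i) ((b.mem_span_image.1 (hpow i)) (Finsupp.mem_support_iff.2 h))
  rw [map_sub, map_smul, b.repr_self, Finsupp.sub_apply, sub_eq_zero] at hcoord
  simpa [LinearMap.toMatrix_apply] using hcoord

end LinearAlgebra

section FiniteGroup

variable {R G : Type*} [CommRing R] [Group G]

/-- The class functions on `G`, as a submodule of all functions. -/
def classFunctions (R G : Type*) [CommRing R] [Group G] : Submodule R (G → R) where
  carrier := {f | ∀ x y, f (x * y * x⁻¹) = f y}
  add_mem' hf hg x y := congrArg₂ (· + ·) (hf x y) (hg x y)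
  zero_mem' _ _ := rfl
  smul_mem' r _ hf x y := congrArg (r * ·) (hf x y)

theorem mem_classFunctions {f : G → R} :
    f ∈ classFunctions R G ↔ ∀ x y, f (x * y * x⁻¹) = f y :=
  Iff.rfl

theorem finrank_classFunctions_le [StrongRankCondition R] [Finite G] :
    Module.finrank R (classFunctions R G) ≤ Nat.card (ConjClasses G) := by
  have := Fintype.ofFinite (ConjClasses G)
  let restrictToClasses : classFunctions R G →ₗ[R] (ConjClasses G → R) :=
    LinearMap.funLeft R R Quotient.out ∘ₗ (classFunctions R G).subtype
  have heq_out : ∀ f ∈ classFunctions R G, ∀ x, f x = f (Quotient.out (ConjClasses.mk x)) := by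
    intro f hf x
    obtain ⟨c, hc⟩ := isConj_iff.1
      (ConjClasses.mk_eq_mk_iff_isConj.1 (Quotient.out_eq (ConjClasses.mk x)))
    exact (congrArg f hc).symm.trans (hf c _)
  have hinj : Function.Injective restrictToClasses := by
    intro f g hfg
    ext x
    rw [heq_out f f.2 x, heq_out g g.2 x]
    exact congrFun hfg (ConjClasses.mk x)
  simpa [Nat.card_eq_fintype_card] using LinearMap.finrank_le_finrank_of_injective hinj

/-- The sum of the left translations by the elements of `S`: the action of the group-algebra
element `∑ s ∈ S, s` on functions on `G`. -/
def sumTranslates (R : Type*) [CommRing R] (S : Finset G) : Module.End R (G → R) :=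
  ∑ s ∈ S, LinearMap.funLeft R R (s * ·)

theorem sumTranslates_apply (S : Finset G) (f : G → R) (x : G) :
    sumTranslates R S f x = ∑ s ∈ S, f (s * x) := by
  simp [sumTranslates, LinearMap.sum_apply, LinearMap.funLeft_apply]

theorem sumTranslates_pow_apply (S : Finset G) (n : ℕ) (f : G → R) (x : G) :
    (sumTranslates R S ^ n) f x =
      ∑ t ∈ Fintype.piFinset fun _ : Fin n => S, f ((List.ofFn t).prod * x) := by
  induction n generalizing f with
  | zero => simp
  | succ n ih =>
    rw [pow_succ, Module.End.mul_apply, ih]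
    simp only [sumTranslates_apply]
    rw [Finset.sum_comm, ← Finset.sum_product']
    refine Finset.sum_equiv (Fin.consEquiv fun _ => G) (fun p => ?_) fun p _ => ?_
    · simp [Fin.consEquiv, Fin.forall_fin_succ]
    · simp [Fin.consEquiv, List.ofFn_succ, mul_assoc]

theorem sumTranslates_mem_classFunctions {S : Finset G} (hS : ∀ x, ∀ s ∈ S, x * s * x⁻¹ ∈ S)
    {f : G → R} (hf : f ∈ classFunctions R G) : sumTranslates R S f ∈ classFunctions R G := by
  intro x y
  simp only [sumTranslates_apply]
  refine Finset.sum_nbij' (fun s => x⁻¹ * s * x) (fun s => x * s * x⁻¹) ?_ (hS x) ?_ ?_ ?_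
  · exact fun s hs => by simpa using hS x⁻¹ s hs
  · exact fun s _ => by group
  · exact fun s _ => by group
  · intro s _
    rw [← hf x (x⁻¹ * s * x * y)]
    congr 1
    group

variable [Fintype G]

/-- The sum of all conjugates of a function on `G`. -/
def conjSum (R G : Type*) [CommRing R] [Group G] [Fintype G] : Module.End R (G → R) :=
  ∑ g : G, LinearMap.funLeft R R fun x => g * x * g⁻¹

theorem conjSum_apply (f : G → R) (x : G) : conjSum R G f x = ∑ g, f (g * x * g⁻¹) := by
  simp [conjSum, LinearMap.sum_apply, LinearMap.funLeft_apply]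

theorem conjSum_mem_classFunctions (f : G → R) : conjSum R G f ∈ classFunctions R G := by
  intro x y
  simp only [conjSum_apply]
  refine Fintype.sum_equiv (Equiv.mulRight x) _ _ fun g => congrArg f ?_
  simp [mul_assoc]

theorem conjSum_of_mem_classFunctions {f : G → R} (hf : f ∈ classFunctions R G) :
    conjSum R G f = (Fintype.card G : R) • f := by
  ext x
  simp [conjSum_apply, mem_classFunctions.1 hf]

theorem card_commutator_factorizations_eq_trace (S : Finset G) (n : ℕ) :
    (Nat.card {c : G × G × (Fin n → G) //
        c.1 * c.2.1 * c.1⁻¹ * c.2.1⁻¹ * (List.ofFn c.2.2).prod = 1 ∧ ∀ i, c.2.2 i ∈ S} : R) =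
      LinearMap.trace R _ (conjSum R G * sumTranslates R S ^ n) := by
  classical
  -- The tuples with first two entries `a`, `b` contribute to the `b`-th diagonal entry.
  have hiff : ∀ a b t : G, a * b * a⁻¹ * b⁻¹ * t = 1 ↔ t * (a * b * a⁻¹) = b := by
    intro a b t
    rw [mul_eq_one_comm, ← mul_assoc, mul_inv_eq_one]
  rw [trace_eq_sum_apply_single, Nat.card_eq_fintype_card, Fintype.card_subtype,
    Finset.natCast_card_filter, Fintype.sum_prod_type]
  simp only [Fintype.sum_prod_type]
  rw [Finset.sum_comm]
  refine Finset.sum_congr rfl fun b _ => ?_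
  simp only [Module.End.mul_apply, conjSum_apply, sumTranslates_pow_apply]
  refine Finset.sum_congr rfl fun a _ => ?_
  simp only [Pi.single_apply, ← Finset.natCast_card_filter]
  congr 2
  ext t
  simp [hiff, and_comm]

theorem card_commutator_factorizations [IsDomain R] [IsPrincipalIdealRing R] {S : Finset G}
    (hS : ∀ x, ∀ s ∈ S, x * s * x⁻¹ ∈ S) (n : ℕ) :
    (Nat.card {c : G × G × (Fin n → G) //
        c.1 * c.2.1 * c.1⁻¹ * c.2.1⁻¹ * (List.ofFn c.2.2).prod = 1 ∧ ∀ i, c.2.2 i ∈ S} : R) =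
      Fintype.card G * LinearMap.trace R _
        ((sumTranslates R S).restrict (fun _ => sumTranslates_mem_classFunctions hS) ^ n) := by
  have hmem : ∀ f, (conjSum R G * sumTranslates R S ^ n) f ∈ classFunctions R G :=
    fun f => conjSum_mem_classFunctions _
  have hrestrict : (conjSum R G * sumTranslates R S ^ n).restrict (fun f _ => hmem f) =
      (Fintype.card G : R) •
        (sumTranslates R S).restrict (fun _ => sumTranslates_mem_classFunctions hS) ^ n := by
    rw [Module.End.pow_restrict]
    refine LinearMap.ext fun f => Subtype.ext (conjSum_of_mem_classFunctions ?_)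
    exact Module.End.pow_apply_mem_of_forall_mem n
      (fun _ => sumTranslates_mem_classFunctions hS) f.1 f.2
  rw [card_commutator_factorizations_eq_trace,
    ← LinearMap.trace_restrict_eq_of_forall_mem _ _ hmem, hrestrict, map_smul, smul_eq_mul]

end FiniteGroup

section Words

variable {R ι κ : Type*} [CommRing R] [Fintype ι] [DecidableEq κ]

/-- The number of occurrences of each letter in a word, that is, the weight of the word. -/
def letterCount (w : ι → κ) (a : κ) : ℕ := Fintype.card {i // w i = a}

theorem letterCount_eq_sum_single (w : ι → κ) : letterCount w = ∑ i, Pi.single (w i) 1 := by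
  ext a
  simp [letterCount, Fintype.card_subtype, Finset.sum_apply, Pi.single_apply, eq_comm]

theorem sum_letterCount [Fintype κ] (w : ι → κ) : ∑ a, letterCount w a = Fintype.card ι := by
  simp [letterCount_eq_sum_single, Finset.sum_comm (s := Finset.univ (α := κ))]

theorem letterCount_comp_perm (w : ι → κ) (σ : Equiv.Perm ι) :
    letterCount (w ∘ σ) = letterCount w := by
  ext a
  exact Fintype.card_congr (σ.subtypeEquiv fun _ => Iff.rfl)

theorem letterCount_perm_comp (w : ι → κ) (π : Equiv.Perm κ) :
    letterCount (π ∘ w) ∘ π = letterCount w := by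
  ext a
  simp [letterCount]

theorem letterCount_update_add_single [DecidableEq ι] (w : ι → κ) (i : ι) (b : κ) :
    letterCount (Function.update w i b) + Pi.single (w i) 1 = letterCount w + Pi.single b 1 := by
  have hupdate : (fun j => (Pi.single (Function.update w i b j) 1 : κ → ℕ)) =
      Function.update (fun j => Pi.single (w j) 1) i (Pi.single b 1 : κ → ℕ) :=
    Function.comp_update (fun c => (Pi.single c 1 : κ → ℕ)) w i b
  rw [letterCount_eq_sum_single, letterCount_eq_sum_single, hupdate,
    Finset.sum_update_of_mem (Finset.mem_univ i),
    ← Finset.sum_sdiff (Finset.subset_univ {i}), Finset.sum_singleton]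
  abel

/-- Functions on words in the alphabet `κ` with positions `ι`: a coordinate model of the tensor
power `(R^κ)^⊗ι`. -/
abbrev WordFun (R ι κ : Type*) := (ι → κ) → R

/-- The action of `Perm ι` on `(R^κ)^⊗ι` by permuting the tensor factors. -/
def placeRep : Representation R (Equiv.Perm ι) (WordFun R ι κ) where
  toFun σ := LinearMap.funLeft R R (· ∘ σ)
  map_one' := rfl
  map_mul' _ _ := rfl

omit [Fintype ι] [DecidableEq κ] in
theorem placeRep_apply (σ : Equiv.Perm ι) (F : WordFun R ι κ) (w : ι → κ) :
    placeRep σ F w = F (w ∘ σ) :=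
  rfl

/-- The polarization operator: the action on `(R^κ)^⊗ι` of the elementary matrix of `gl(κ)`
that replaces one letter `a` by `b`. -/
def polarize [DecidableEq ι] (a b : κ) : Module.End R (WordFun R ι κ) where
  toFun F w := ∑ i, if w i = a then F (Function.update w i b) else 0
  map_add' F G := by
    ext w
    simp only [Pi.add_apply, ← Finset.sum_add_distrib, ite_add_ite, add_zero]
  map_smul' r F := by
    ext w
    simp only [Pi.smul_apply, smul_eq_mul, RingHom.id_apply, Finset.mul_sum, mul_ite, mul_zero]

theorem polarize_apply [DecidableEq ι] (a b : κ) (F : WordFun R ι κ) (w : ι → κ) :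
    polarize a b F w = ∑ i, if w i = a then F (Function.update w i b) else 0 :=
  rfl

variable [Fintype κ]

/-- The projection of `(R^κ)^⊗ι` onto its weight space of weight `μ`. -/
def weightProj (μ : κ → ℕ) : Module.End R (WordFun R ι κ) where
  toFun F w := if letterCount w = μ then F w else 0
  map_add' F G := by
    ext w
    simp only [Pi.add_apply, ite_add_ite, add_zero]
  map_smul' r F := by
    ext w
    simp only [Pi.smul_apply, smul_eq_mul, RingHom.id_apply, mul_ite, mul_zero]

theorem weightProj_apply (μ : κ → ℕ) (F : WordFun R ι κ) (w : ι → κ) :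
    weightProj μ F w = if letterCount w = μ then F w else 0 :=
  rfl

theorem commute_weightProj_placeRep (μ : κ → ℕ) (σ : Equiv.Perm ι) :
    Commute (weightProj μ) (placeRep σ : Module.End R (WordFun R ι κ)) := by
  refine LinearMap.ext fun F => funext fun w => ?_
  simp only [Module.End.mul_apply, weightProj_apply, placeRep_apply, letterCount_comp_perm]

variable [DecidableEq ι]

omit [Fintype κ] in
theorem letterCount_update_eq_iff {w : ι → κ} {i : ι} {a : κ} (hi : w i = a) (b : κ) (μ : κ → ℕ) :
    letterCount (Function.update w i b) = μ + Pi.single b 1 ↔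
      letterCount w = μ + Pi.single a 1 := by
  rw [← add_left_inj (Pi.single a 1), ← hi, letterCount_update_add_single, add_right_comm,
    add_left_inj]

omit [Fintype κ] in
theorem commute_polarize_placeRep (a b : κ) (σ : Equiv.Perm ι) :
    Commute (polarize a b) (placeRep σ : Module.End R (WordFun R ι κ)) := by
  refine LinearMap.ext fun F => funext fun w => ?_
  simp only [Module.End.mul_apply, polarize_apply, placeRep_apply, Function.comp_apply]
  rw [← Equiv.sum_comp σ]
  refine Finset.sum_congr rfl fun i _ => ?_
  rw [Function.update_comp_equiv, Equiv.symm_apply_apply]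

theorem weightProj_mul_polarize (a b : κ) (μ : κ → ℕ) :
    weightProj (μ + Pi.single a 1) * polarize a b =
      (polarize a b * weightProj (μ + Pi.single b 1) : Module.End R (WordFun R ι κ)) := by
  refine LinearMap.ext fun F => funext fun w => ?_
  simp only [Module.End.mul_apply, polarize_apply, weightProj_apply]
  rw [Finset.sum_congr rfl fun i _ => if_ctx_congr Iff.rfl (fun hi : w i = a =>
    if_congr (letterCount_update_eq_iff hi b μ) rfl rfl) fun _ => rfl]
  split_ifs <;> simp

theorem weightProj_mul_polarize_eq_zero {a : κ} {μ : κ → ℕ} (ha : μ a = 0) (b : κ) :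
    weightProj μ * polarize a b = (0 : Module.End R (WordFun R ι κ)) := by
  refine LinearMap.ext fun F => funext fun w => ?_
  rw [Module.End.mul_apply, weightProj_apply]
  split_ifs with hw
  · have hne : ∀ i, w i ≠ a := by
      rwa [← hw, letterCount, Fintype.card_eq_zero_iff, isEmpty_subtype] at ha
    simp [polarize_apply, hne]
  · rfl

theorem weightProj_mul_polarize_self (a : κ) (μ : κ → ℕ) :
    weightProj μ * polarize a a = ((μ a : R) • weightProj μ : Module.End R (WordFun R ι κ)) := by
  have hself : ∀ (F : WordFun R ι κ) w, polarize a a F w = letterCount w a * F w := by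
    intro F w
    have hupdate : ∀ i, (if w i = a then F (Function.update w i a) else 0) =
        if w i = a then F w else 0 := by
      intro i
      split_ifs with hi
      · rw [← hi, Function.update_eq_self]
      · rfl
    simp [polarize_apply, hupdate, letterCount, Fintype.card_subtype, ← Finset.sum_filter]
  refine LinearMap.ext fun F => funext fun w => ?_
  simp only [Module.End.mul_apply, weightProj_apply, LinearMap.smul_apply, Pi.smul_apply, hself]
  split_ifs with hw
  · rw [← hw, smul_eq_mul]
  · simp

omit [Fintype κ] in
theorem polarize_polarize_apply (a b : κ) (F : WordFun R ι κ) (w : ι → κ) :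
    polarize a b (polarize b a F) w = letterCount w a * F w +
      ∑ p ∈ (Finset.univ : Finset ι).offDiag,
        if w p.1 = a ∧ w p.2 = b then F (w ∘ Equiv.swap p.1 p.2) else 0 := by
  have hdiag : ∀ i, w i = a → Function.update (Function.update w i b) i a = w := by
    rintro i rfl
    rw [Function.update_idem, Function.update_eq_self]
  have hoff : ∀ i j, i ≠ j → w i = a → w j = b →
      Function.update (Function.update w i b) j a = w ∘ Equiv.swap i j := by
    rintro i j hij rfl rfl
    rw [Equiv.comp_swap_eq_update, Function.update_comm hij]
  have hinner : ∀ i, (if w i = a then polarize b a F (Function.update w i b) else 0) =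
      (if w i = a then F w else 0) + ∑ j ∈ Finset.univ.erase i,
        if w i = a ∧ w j = b then F (w ∘ Equiv.swap i j) else 0 := by
    intro i
    split_ifs with hi
    · rw [polarize_apply, ← Finset.add_sum_erase _ _ (Finset.mem_univ i),
        if_pos (Function.update_self ..), hdiag i hi]
      congr 1
      refine Finset.sum_congr rfl fun j hj => ?_
      have hji := Finset.ne_of_mem_erase hj
      rw [Function.update_of_ne hji]
      by_cases hj' : w j = b
      · simp [hi, hj', hoff i j hji.symm hi hj']
      · simp [hj']
    · simp [hi]
  rw [polarize_apply, Finset.sum_congr rfl fun i _ => hinner i, Finset.sum_add_distrib]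
  congr 1
  · simp [letterCount, Fintype.card_subtype, ← Finset.sum_filter]
  · rw [Finset.sum_sigma']
    refine Finset.sum_bij' (fun p _ => (p.1, p.2)) (fun p _ => ⟨p.1, p.2⟩) ?_ ?_ ?_ ?_ ?_ <;>
      simp [eq_comm]

theorem weightProj_mul_polarize_mul_polarize (a b : κ) (μ : κ → ℕ) :
    weightProj μ * (polarize a b * polarize b a) =
      (weightProj μ * (polarize b a * polarize a b) + ((μ a : R) - μ b) • weightProj μ :
        Module.End R (WordFun R ι κ)) := by
  refine LinearMap.ext fun F => funext fun w => ?_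
  have hsymm : ∑ p ∈ (Finset.univ : Finset ι).offDiag,
        (if w p.1 = b ∧ w p.2 = a then F (w ∘ Equiv.swap p.1 p.2) else 0) =
      ∑ p ∈ (Finset.univ : Finset ι).offDiag,
        if w p.1 = a ∧ w p.2 = b then F (w ∘ Equiv.swap p.1 p.2) else 0 := by
    refine Finset.sum_equiv (Equiv.prodComm ι ι) (by simp [eq_comm]) fun p _ => ?_
    simp [and_comm, Equiv.swap_comm p.1 p.2]
  simp only [Module.End.mul_apply, weightProj_apply, LinearMap.add_apply, Pi.add_apply,
    LinearMap.smul_apply, Pi.smul_apply, polarize_polarize_apply, hsymm]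
  split_ifs with hw
  · rw [← hw, smul_eq_mul]
    ring
  · simp

-- The Casimir element of `gl(κ)` acts, up to a scalar, as the sum of all transpositions.
theorem sum_polarize_mul_polarize :
    ∑ a, ∑ b, polarize a b * polarize b a =
      ((Fintype.card κ * Fintype.card ι : R) • 1 +
        ∑ p ∈ (Finset.univ : Finset ι).offDiag, placeRep (Equiv.swap p.1 p.2) :
        Module.End R (WordFun R ι κ)) := by
  refine LinearMap.ext fun F => funext fun w => ?_
  have hlength : ∑ a, (letterCount w a : R) = Fintype.card ι := by
    rw [← Nat.cast_sum, sum_letterCount]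
  have hpair : ∀ p : ι × ι, ∑ a, ∑ b,
      (if w p.1 = a ∧ w p.2 = b then F (w ∘ Equiv.swap p.1 p.2) else 0) =
        F (w ∘ Equiv.swap p.1 p.2) := by
    intro p
    simp [ite_and]
  simp only [LinearMap.sum_apply, Finset.sum_apply, Module.End.mul_apply, polarize_polarize_apply,
    Finset.sum_add_distrib, Finset.sum_const, LinearMap.add_apply, Pi.add_apply]
  congr 1
  · simp [← Finset.mul_sum, ← Finset.sum_mul, hlength, mul_assoc]
  · simp only [Finset.sum_comm (s := (Finset.univ : Finset κ)) (t := Finset.offDiag _), hpair]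
    rfl

end Words

section Transpositions

variable {ι : Type*} [Fintype ι] [DecidableEq ι]

/-- The transpositions in `Perm ι`, encoded as the permutations that move exactly two points in
order to have decidable membership. -/
def transpositions (ι : Type*) [Fintype ι] [DecidableEq ι] : Finset (Equiv.Perm ι) :=
  {τ | τ.support.card = 2}

theorem mem_transpositions {τ : Equiv.Perm ι} : τ ∈ transpositions ι ↔ τ.IsSwap := by
  rw [transpositions, Finset.mem_filter_univ, Equiv.Perm.card_support_eq_two]

theorem conj_mem_transpositions (x : Equiv.Perm ι) :
    ∀ τ ∈ transpositions ι, x * τ * x⁻¹ ∈ transpositions ι := by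
  simp [transpositions]

theorem sum_offDiag_swap {M : Type*} [AddCommMonoid M] (f : Equiv.Perm ι → M) :
    ∑ p ∈ (Finset.univ : Finset ι).offDiag, f (Equiv.swap p.1 p.2) =
      2 • ∑ τ ∈ transpositions ι, f τ := by
  have hsupport : ∀ τ ∈ transpositions ι, ∑ _i ∈ τ.support, f τ = 2 • f τ := by
    intro τ hτ
    rw [Finset.sum_const, (Finset.mem_filter_univ τ).1 hτ]
  rw [Finset.smul_sum, ← Finset.sum_congr rfl hsupport, Finset.sum_sigma']
  refine Finset.sum_bij' (fun p _ => ⟨Equiv.swap p.1 p.2, p.1⟩) (fun q _ => (q.2, q.1 q.2))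
    ?_ ?_ ?_ ?_ fun _ _ => rfl
  · rintro ⟨i, j⟩ hij
    simpa [mem_transpositions, Equiv.Perm.swap_isSwap_iff, eq_comm] using hij
  · rintro ⟨τ, i⟩ hτ
    simpa [eq_comm] using And.right (Finset.mem_sigma.1 hτ)
  · simp
  · rintro ⟨_, i⟩ hτ
    obtain ⟨hswap, hi⟩ := Finset.mem_sigma.1 hτ
    obtain ⟨x, y, hxy, rfl⟩ := mem_transpositions.1 hswap
    simp only [Equiv.Perm.support_swap hxy, Finset.mem_insert, Finset.mem_singleton] at hi
    rcases hi with rfl | rfl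
    · simp
    · simp [Equiv.swap_comm]

end Transpositions

section Characters

variable {ι κ : Type*} [Fintype ι] [Fintype κ] [DecidableEq κ]

/-- The character of `Perm ι` on the weight-`μ` space of `(R^κ)^⊗ι`: the permutation character on
words with letter counts `μ`. -/
def permChar (R : Type*) [CommRing R] (μ : κ → ℕ) (σ : Equiv.Perm ι) : R :=
  LinearMap.trace R (WordFun R ι κ) (weightProj μ * placeRep σ)

variable {R : Type*} [CommRing R]

theorem permChar_apply (μ : κ → ℕ) (σ : Equiv.Perm ι) :
    permChar R μ σ = Nat.card {w : ι → κ // letterCount w = μ ∧ w ∘ σ = w} := by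
  classical
  rw [permChar, trace_eq_sum_apply_single, Nat.card_eq_fintype_card, Fintype.card_subtype,
    Finset.natCast_card_filter]
  refine Finset.sum_congr rfl fun w _ => ?_
  simp [Module.End.mul_apply, weightProj_apply, placeRep_apply, Pi.single_apply, ite_and]

theorem permChar_comp_perm (μ : κ → ℕ) (π : Equiv.Perm κ) :
    (permChar R (μ ∘ π) : Equiv.Perm ι → R) = permChar R μ := by
  ext σ
  rw [permChar_apply, permChar_apply]
  congr 1
  refine Nat.card_congr ((Equiv.arrowCongr (Equiv.refl ι) π).subtypeEquiv fun w => ?_)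
  have hcount : letterCount w = μ ∘ π ↔ letterCount (π ∘ w) = μ := by
    rw [← letterCount_perm_comp w π, π.surjective.injective_comp_right.eq_iff]
  have hfix : w ∘ σ = w ↔ (π ∘ w) ∘ σ = π ∘ w :=
    (π.injective.comp_left.eq_iff (a := w ∘ σ)).symm
  exact and_congr hcount hfix

theorem permChar_mem_classFunctions (μ : κ → ℕ) :
    permChar R μ ∈ classFunctions R (Equiv.Perm ι) := by
  intro x y
  rw [permChar, map_mul placeRep, ← mul_assoc, LinearMap.trace_mul_comm, ← mul_assoc,
    ← (commute_weightProj_placeRep μ x⁻¹).eq, mul_assoc, ← map_mul placeRep,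
    inv_mul_cancel_left, permChar]

/-- The sum of squares of the parts, which measures how far `μ` is up the dominance order. -/
def sumSq (μ : κ → ℕ) : ℕ := ∑ a, μ a ^ 2

omit [DecidableEq κ] in
theorem sumSq_comp_perm (μ : κ → ℕ) (π : Equiv.Perm κ) : sumSq (μ ∘ π) = sumSq μ :=
  Equiv.sum_comp π fun a => μ a ^ 2

/-- The span of the permutation characters whose weight has sum of squares greater than `s`. -/
def higherSpan (R ι κ : Type*) [CommRing R] [Fintype ι] [Fintype κ] [DecidableEq κ]
    (s : ℕ) : Submodule R (Equiv.Perm ι → R) :=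
  Submodule.span R (permChar R '' {ν : κ → ℕ | s < sumSq ν})

theorem higherSpan_antitone : Antitone (higherSpan R ι κ) :=
  fun _ _ hst => Submodule.span_mono (Set.image_mono fun _ hν => lt_of_le_of_lt hst hν)

theorem sumSq_add_single (μ : κ → ℕ) (a : κ) :
    sumSq (μ + Pi.single a 1) = sumSq μ + 2 * μ a + 1 := by
  have hsq : ∀ c, (μ + Pi.single a 1 : κ → ℕ) c ^ 2 =
      μ c ^ 2 + if c = a then 2 * μ c + 1 else 0 := by
    intro c
    rcases eq_or_ne c a with rfl | hc
    · simp
      ring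
    · simp [hc]
  simp only [sumSq, hsq, Finset.sum_add_distrib]
  simp [add_assoc]

variable [DecidableEq ι]

/-- The trace of `σ` composed with `polarize a b * polarize b a` on the weight-`μ` space. -/
def polarChar (R : Type*) [CommRing R] (a b : κ) (μ : κ → ℕ) (σ : Equiv.Perm ι) : R :=
  LinearMap.trace R (WordFun R ι κ) (weightProj μ * (polarize a b * polarize b a) * placeRep σ)

theorem polarChar_eq_zero {a : κ} {μ : κ → ℕ} (ha : μ a = 0) (b : κ) :
    (polarChar R a b μ : Equiv.Perm ι → R) = 0 := by
  ext σ
  rw [polarChar, ← mul_assoc, weightProj_mul_polarize_eq_zero ha, zero_mul, zero_mul, map_zero,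
    Pi.zero_apply]

theorem polarChar_self (a : κ) (μ : κ → ℕ) :
    (polarChar R a a μ : Equiv.Perm ι → R) = (μ a ^ 2 : R) • permChar R μ := by
  ext σ
  rw [polarChar, ← mul_assoc, weightProj_mul_polarize_self, smul_mul_assoc,
    weightProj_mul_polarize_self, smul_smul, smul_mul_assoc, map_smul, ← sq, Pi.smul_apply,
    permChar]

theorem polarChar_comm (a b : κ) (μ : κ → ℕ) :
    (polarChar R a b μ : Equiv.Perm ι → R) =
      polarChar R b a μ + ((μ a : R) - μ b) • permChar R μ := by
  ext σ
  rw [polarChar, weightProj_mul_polarize_mul_polarize, add_mul, smul_mul_assoc, map_add, map_smul]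
  rfl

theorem polarChar_add_single (a b : κ) (μ : κ → ℕ) :
    (polarChar R a b (μ + Pi.single a 1) : Equiv.Perm ι → R) =
      polarChar R b a (μ + Pi.single b 1) := by
  ext σ
  rw [polarChar, ← mul_assoc, weightProj_mul_polarize, mul_assoc, mul_assoc,
    LinearMap.trace_mul_comm, polarChar, mul_assoc, mul_assoc, mul_assoc, mul_assoc,
    (commute_polarize_placeRep a b σ).eq]

theorem two_smul_sumTranslates_permChar (μ : κ → ℕ) :
    (2 : R) • sumTranslates R (transpositions ι) (permChar R μ) =
      (∑ a, ∑ b, polarChar R a b μ : Equiv.Perm ι → R) -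
        (Fintype.card κ * Fintype.card ι : R) • permChar R μ := by
  ext σ
  have hcasimir : ∑ a, ∑ b, polarChar R a b μ σ =
      Fintype.card κ * Fintype.card ι * permChar R μ σ +
        ∑ p ∈ (Finset.univ : Finset ι).offDiag, permChar R μ (Equiv.swap p.1 p.2 * σ) := by
    calc ∑ a, ∑ b, polarChar R a b μ σ
        = LinearMap.trace R (WordFun R ι κ)
            (weightProj μ * (∑ a, ∑ b, polarize a b * polarize b a) * placeRep σ) := by
          simp only [polarChar, Finset.mul_sum, Finset.sum_mul, map_sum]
      _ = _ := by
          rw [sum_polarize_mul_polarize]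
          simp only [mul_add, add_mul, Finset.mul_sum, Finset.sum_mul, map_add, map_sum, permChar,
            map_mul placeRep, mul_smul_comm, smul_mul_assoc, mul_one, map_smul, smul_eq_mul,
            mul_assoc]
  simp only [Pi.sub_apply, Finset.sum_apply, Pi.smul_apply, hcasimir, sumTranslates_apply,
    sum_offDiag_swap fun τ => permChar R μ (τ * σ), smul_eq_mul, nsmul_eq_mul, Nat.cast_ofNat,
    add_sub_cancel_left]

-- Cyclicity of the trace followed by a commutation moves one letter from `a` to `b`, which raises
-- `sumSq`, until no letter `a` is left.
theorem polarChar_mem_higherSpan {a b : κ} (hab : a ≠ b) {μ : κ → ℕ} (h : μ a ≤ μ b) :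
    polarChar R a b μ ∈ higherSpan R ι κ (sumSq μ) := by
  induction hn : μ a generalizing μ with
  | zero =>
    rw [polarChar_eq_zero hn]
    exact Submodule.zero_mem _
  | succ n ih =>
    obtain ⟨ρ, rfl⟩ : ∃ ρ : κ → ℕ, μ = ρ + Pi.single a 1 := by
      refine ⟨Function.update μ a n, funext fun c => ?_⟩
      rcases eq_or_ne c a with rfl | hc
      · rw [hn, Pi.add_apply, Function.update_self, Pi.single_eq_same]
      · rw [Pi.add_apply, Function.update_of_ne hc, Pi.single_eq_of_ne hc, add_zero]
    simp only [Pi.add_apply, Pi.single_eq_same, Pi.single_eq_of_ne hab.symm, add_zero] at h hn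
    have hlt : sumSq (ρ + Pi.single a 1) < sumSq (ρ + Pi.single b 1) := by
      rw [sumSq_add_single, sumSq_add_single]
      omega
    have hρ : polarChar R a b (ρ + Pi.single b 1) ∈
        higherSpan R ι κ (sumSq (ρ + Pi.single b 1)) :=
      ih (by simp [hab]; omega) (by simp [hab]; omega)
    rw [polarChar_add_single, polarChar_comm b a]
    exact Submodule.add_mem _ (higherSpan_antitone hlt.le hρ)
      (Submodule.smul_mem _ _ (Submodule.subset_span ⟨_, hlt, rfl⟩))

/-- The diagonal coefficient of `polarChar a b μ` in the triangular expansion along `permChar`. -/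
def polarCoeff (μ : κ → ℕ) (a b : κ) : ℕ := if a = b then μ a ^ 2 else μ a - μ b

theorem polarChar_sub_smul_mem_higherSpan (a b : κ) (μ : κ → ℕ) :
    polarChar R a b μ - (polarCoeff μ a b : R) • permChar R μ ∈ higherSpan R ι κ (sumSq μ) := by
  rcases eq_or_ne a b with rfl | hab
  · simp [polarCoeff, polarChar_self]
  · rw [polarCoeff, if_neg hab]
    rcases le_total (μ a) (μ b) with h | h
    · simpa [Nat.sub_eq_zero_of_le h] using polarChar_mem_higherSpan hab h
    · simpa [polarChar_comm a b, Nat.cast_sub h] using polarChar_mem_higherSpan hab.symm h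

theorem two_smul_sumTranslates_permChar_sub_mem (μ : κ → ℕ) :
    (2 : R) • sumTranslates R (transpositions ι) (permChar R μ) -
      (∑ a, ∑ b, (polarCoeff μ a b : R) - Fintype.card κ * Fintype.card ι) • permChar R μ ∈
        higherSpan R ι κ (sumSq μ) := by
  rw [two_smul_sumTranslates_permChar, sub_smul, sub_sub_sub_cancel_right]
  simp only [Finset.sum_smul, ← Finset.sum_sub_distrib]
  exact Submodule.sum_mem _ fun a _ => Submodule.sum_mem _ fun b _ =>
    polarChar_sub_smul_mem_higherSpan a b μ

end Characters

section YoungDiagrams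

/-- The set `Y^d` of Young diagrams with `d` cells. -/
abbrev DiagramOfCard (d : ℕ) := {lam : YoungDiagram // lam.card = d}

variable {lam : YoungDiagram} {d : ℕ}

theorem sum_cells_eq_sum_sum_range {M : Type*} [AddCommMonoid M] (f : ℕ × ℕ → M)
    (h : ∀ c ∈ lam, c.1 < d) :
    ∑ c ∈ lam.cells, f c = ∑ i : Fin d, ∑ j ∈ Finset.range (lam.rowLen i), f (i, j) := by
  rw [Finset.sum_sigma', eq_comm]
  refine Finset.sum_bij (fun p _ => (p.1, p.2)) ?_ ?_ ?_ fun _ _ => rfl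
  · rintro ⟨i, j⟩ hj
    simpa [YoungDiagram.mem_iff_lt_rowLen] using hj
  · rintro ⟨i, j⟩ _ ⟨i', j'⟩ _ heq
    simpa [Fin.ext_iff] using heq
  · rintro ⟨i, j⟩ hc
    exact ⟨⟨⟨i, h _ ((lam.mem_cells _).1 hc)⟩, j⟩,
      by simpa [YoungDiagram.mem_iff_lt_rowLen] using hc, rfl⟩

theorem card_eq_sum_rowLen (h : ∀ c ∈ lam, c.1 < d) : lam.card = ∑ i : Fin d, lam.rowLen i := by
  rw [YoungDiagram.card, Finset.card_eq_sum_ones, sum_cells_eq_sum_sum_range _ h]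
  simp

theorem card_ofRowLens {w : List ℕ} (hw : w.SortedGE) :
    (YoungDiagram.ofRowLens w hw).card = w.sum := by
  rw [card_eq_sum_rowLen (d := w.length) fun c hc => (YoungDiagram.mem_ofRowLens.1 hc).1]
  simp only [YoungDiagram.rowLen_ofRowLens, Fin.getElem_fin, Fin.sum_univ_getElem]

theorem fst_lt_card {c : ℕ × ℕ} (hc : c ∈ lam) : c.1 < lam.card :=
  calc c.1 < lam.colLen c.2 := YoungDiagram.mem_iff_lt_colLen.1 hc
    _ = (lam.col c.2).card := lam.colLen_eq_card
    _ ≤ lam.card := Finset.card_le_card (Finset.filter_subset _ _)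

/-- The row lengths of a Young diagram with at most `d` rows, as a function on `Fin d`: the
encoding of the partition as a weight of `gl_d`. -/
def rows (d : ℕ) (lam : YoungDiagram) (i : Fin d) : ℕ := lam.rowLen i

theorem antitone_rows (d : ℕ) (lam : YoungDiagram) : Antitone (rows d lam) :=
  fun i j hij => lam.rowLen_anti i j hij

theorem sum_rows (hlam : lam.card = d) : ∑ i, rows d lam i = d := by
  rw [← hlam]
  exact (card_eq_sum_rowLen fun _ => fst_lt_card).symm

theorem rows_injOn : Set.InjOn (rows d) {lam | lam.card = d} := by
  intro lam hlam nu hnu hrows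
  have hmem : ∀ {lam : YoungDiagram}, lam.card = d → ∀ i j,
      (i, j) ∈ lam ↔ ∃ h : i < d, j < rows d lam ⟨i, h⟩ := by
    rintro lam rfl i j
    exact ⟨fun h => ⟨fst_lt_card h, YoungDiagram.mem_iff_lt_rowLen.1 h⟩,
      fun ⟨_, h⟩ => YoungDiagram.mem_iff_lt_rowLen.2 h⟩
  ext ⟨i, j⟩
  rw [YoungDiagram.mem_cells, YoungDiagram.mem_cells, hmem hlam, hmem hnu, hrows]

theorem exists_rows_eq_comp_perm {μ : Fin d → ℕ} (hμ : ∑ i, μ i = d) :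
    ∃ lam : YoungDiagram, lam.card = d ∧ ∃ π : Equiv.Perm (Fin d), rows d lam = μ ∘ π := by
  set π : Equiv.Perm (Fin d) := Tuple.sort (OrderDual.toDual ∘ μ)
  have hanti : Antitone (μ ∘ π) := Tuple.monotone_sort (OrderDual.toDual ∘ μ)
  refine ⟨YoungDiagram.ofRowLens (List.ofFn (μ ∘ π)) hanti.sortedGE_ofFn, ?_, π, ?_⟩
  · rw [card_ofRowLens, List.sum_ofFn]
    exact (Equiv.sum_comp π μ).trans hμ
  · ext i
    have h := YoungDiagram.rowLen_ofRowLens (hw := hanti.sortedGE_ofFn)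
      (Fin.cast List.length_ofFn.symm i)
    simpa [rows] using h

theorem card_conjClasses_perm_le [Finite (DiagramOfCard d)] {ι : Type*}
    [Fintype ι] (hι : Fintype.card ι = d) :
    Nat.card (ConjClasses (Equiv.Perm ι)) ≤ Nat.card (DiagramOfCard d) := by
  classical
  subst hι
  have hsort : ∀ p : (Fintype.card ι).Partition, (p.parts.sort (· ≥ ·)).SortedGE :=
    fun p => (Multiset.pairwise_sort p.parts _).sortedGE
  let diagram : ConjClasses (Equiv.Perm ι) → DiagramOfCard (Fintype.card ι) :=
    Quotient.lift (fun σ => ⟨YoungDiagram.ofRowLens _ (hsort σ.partition), by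
      rw [card_ofRowLens, ← Multiset.sum_coe, Multiset.sort_eq, σ.partition.parts_sum]⟩)
      fun σ τ h => by simp only [Equiv.Perm.partition_eq_of_isConj.1 h]
  refine Nat.card_le_card_of_injective diagram ?_
  rintro ⟨σ⟩ ⟨τ⟩ h
  have hparts : ∀ p : (Fintype.card ι).Partition,
      ((YoungDiagram.ofRowLens _ (hsort p)).rowLens : Multiset ℕ) = p.parts := by
    intro p
    rw [YoungDiagram.rowLens_ofRowLens_eq_self fun x hx => p.parts_pos ((Multiset.mem_sort _).1 hx),
      Multiset.sort_eq]
  refine Quotient.sound (Equiv.Perm.partition_eq_of_isConj.2 (Nat.Partition.ext ?_))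
  rw [← hparts σ.partition, ← hparts τ.partition]
  exact congrArg (fun lam => (lam.rowLens : Multiset ℕ)) (congrArg Subtype.val h)

theorem sum_sum_polarCoeff_of_antitone {μ : Fin d → ℕ} (hμ : Antitone μ) :
    ∑ a, ∑ b, (polarCoeff μ a b : ℤ) = ∑ a, ((μ a : ℤ) ^ 2 + (d - 1 - 2 * a) * μ a) := by
  have hcoeff : ∀ a b, (polarCoeff μ a b : ℤ) =
      (if a = b then (μ a : ℤ) ^ 2 else 0) + ((if a < b then (μ a : ℤ) else 0) -
        if a < b then (μ b : ℤ) else 0) := by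
    intro a b
    rcases lt_trichotomy a b with h | rfl | h
    · simp [polarCoeff, h, h.ne, Nat.cast_sub (hμ h.le)]
    · simp [polarCoeff]
    · simp [polarCoeff, h.ne', h.not_gt, Nat.sub_eq_zero_of_le (hμ h.le)]
  have hright : ∑ a, ∑ b, (if a < b then (μ a : ℤ) else 0) =
      ∑ a : Fin d, (d - 1 - a : ℤ) * μ a := by
    refine Finset.sum_congr rfl fun a _ => ?_
    rw [← Finset.sum_filter, Finset.sum_const, Finset.filter_lt_eq_Ioi, Fin.card_Ioi, nsmul_eq_mul]
    congr 1
    have := a.isLt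
    omega
  have hleft : ∑ a, ∑ b, (if a < b then (μ b : ℤ) else 0) = ∑ b : Fin d, (b : ℤ) * μ b := by
    rw [Finset.sum_comm]
    refine Finset.sum_congr rfl fun b _ => ?_
    rw [← Finset.sum_filter, Finset.sum_const, Finset.filter_gt_eq_Iio, Fin.card_Iio, nsmul_eq_mul]
  simp only [hcoeff, Finset.sum_add_distrib, Finset.sum_sub_distrib, hright, hleft]
  rw [← Finset.sum_sub_distrib]
  simp only [Finset.sum_ite_eq, Finset.mem_univ, if_true]
  congr 1
  exact Finset.sum_congr rfl fun a _ => by ring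

theorem two_mul_sum_range_content (i m : ℕ) :
    2 * ∑ j ∈ Finset.range m, content (i, j) = (m : ℤ) ^ 2 - (2 * i + 1) * m := by
  induction m with
  | zero => simp
  | succ m ih =>
    rw [Finset.sum_range_succ, mul_add, ih, content]
    push_cast
    ring

theorem sum_sum_polarCoeff_rows (hlam : lam.card = d) :
    ∑ a, ∑ b, (polarCoeff (rows d lam) a b : ℤ) = 2 * ∑ c ∈ lam.cells, content c + d * d := by
  have hd : (d : ℤ) = ∑ a, (rows d lam a : ℤ) := by exact_mod_cast (sum_rows hlam).symm
  calc ∑ a, ∑ b, (polarCoeff (rows d lam) a b : ℤ)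
      = ∑ a, (((rows d lam a : ℤ) ^ 2 - (2 * a + 1) * rows d lam a) + d * rows d lam a) := by
        rw [sum_sum_polarCoeff_of_antitone (antitone_rows d lam)]
        exact Finset.sum_congr rfl fun a _ => by ring
    _ = 2 * ∑ c ∈ lam.cells, content c + d * d := by
        rw [Finset.sum_add_distrib, ← Finset.mul_sum, ← hd,
          sum_cells_eq_sum_sum_range content fun _ hc => hlam ▸ fst_lt_card hc, Finset.mul_sum]
        simp only [two_mul_sum_range_content, rows]

end YoungDiagrams

section Separation

variable {ι κ : Type*}

theorem exists_perm_comp_eq_iff_factorsThrough [Finite ι] {β : Type*} (w : ι → κ) :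
    ∃ σ : Equiv.Perm ι, ∀ u : ι → β, u ∘ σ = u ↔ Function.FactorsThrough u w := by
  classical
  have := Fintype.ofFinite ι
  -- `σ` permutes each fiber of `w` in a single cycle.
  have hcycle : ∀ a, ∃ f : Equiv.Perm {i // w i = a}, f.IsCycleOn Set.univ := by
    intro a
    obtain ⟨f, hf, -⟩ := (Finset.univ : Finset {i // w i = a}).exists_cycleOn
    exact ⟨f, by simpa using hf⟩
  choose f hf using hcycle
  set σ : Equiv.Perm ι := Equiv.ofFiberEquiv f
  have hσ : ∀ a (x : {i // w i = a}), σ x = f a x := by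
    rintro _ ⟨i, rfl⟩
    rfl
  refine ⟨σ, fun u => ⟨fun hu i j hij => ?_, fun hu => funext fun i => hu ?_⟩⟩
  · have hpow : ∀ (n : ℕ) (x : {k // w k = w j}), u ((f (w j) ^ n) x : {k // w k = w j}) = u x := by
      intro n
      induction n with
      | zero => exact fun _ => rfl
      | succ n ih =>
        intro x
        rw [pow_succ, Equiv.Perm.mul_apply, ih, ← hσ]
        exact congrFun hu x
    obtain ⟨n, hn⟩ := (hf (w j)).exists_pow_eq' Set.finite_univ (Set.mem_univ ⟨j, rfl⟩)
      (Set.mem_univ ⟨i, hij⟩)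
    simpa [hn] using hpow n ⟨j, rfl⟩
  · exact (hσ (w i) ⟨i, rfl⟩ ▸ (f (w i) ⟨i, rfl⟩).2 :)

theorem exists_perm_comp_eq_of_factorsThrough [Finite ι] {u w : ι → κ}
    (huw : Function.FactorsThrough u w) (hwu : Function.FactorsThrough w u) :
    ∃ π : Equiv.Perm κ, π ∘ w = u := by
  have hlift : Function.Injective (Quotient.lift u huw : Quotient (Setoid.ker w) → κ) := by
    rintro ⟨i⟩ ⟨j⟩ hij
    exact Quotient.sound (hwu hij)
  obtain ⟨π, hπ⟩ := Equiv.Perm.exists_extending_pair (Setoid.kerLift w) (Quotient.lift u huw)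
    (Setoid.kerLift_injective w) hlift
  exact ⟨π, funext fun i => hπ (Quotient.mk'' i)⟩

variable [Fintype ι] [Fintype κ] [DecidableEq κ]

theorem exists_letterCount_eq {μ : κ → ℕ} (hμ : ∑ a, μ a = Fintype.card ι) :
    ∃ w : ι → κ, letterCount w = μ := by
  let e : ι ≃ Σ a, Fin (μ a) := Fintype.equivOfCardEq (by simp [hμ])
  refine ⟨fun i => (e i).1, funext fun a => ?_⟩
  exact (Fintype.card_congr ((e.subtypeEquiv fun _ => Iff.rfl).trans (Equiv.sigmaSubtype a))).trans
    (Fintype.card_fin _)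

theorem sumSq_letterCount (w : ι → κ) :
    sumSq (letterCount w) = Fintype.card {p : ι × ι // w p.1 = w p.2} := by
  have hcount : ∀ a, letterCount w a = ∑ i, if w i = a then 1 else 0 := by
    simp [letterCount, Fintype.card_subtype]
  simp only [sumSq, sq, hcount, Finset.sum_mul_sum, Fintype.card_subtype, Finset.card_filter,
    Fintype.sum_prod_type]
  rw [Finset.sum_comm]
  refine Finset.sum_congr rfl fun i _ => ?_
  rw [Finset.sum_comm]
  simp [eq_comm]

theorem sumSq_letterCount_lt {u w : ι → κ} (huw : Function.FactorsThrough u w)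
    (hwu : ¬ Function.FactorsThrough w u) : sumSq (letterCount w) < sumSq (letterCount u) := by
  rw [sumSq_letterCount, sumSq_letterCount, Fintype.card_subtype, Fintype.card_subtype]
  refine Finset.card_lt_card (Finset.ssubset_iff_subset_ne.2 ⟨fun p => ?_, fun h => hwu ?_⟩)
  · simpa using fun hp => huw hp
  · intro i j hij
    simpa using h.ge (show (i, j) ∈ _ by simpa using hij)

end Separation

section DiagramCharacters

variable {ι : Type*} [Fintype ι] {d : ℕ}

theorem letterCount_eq_or_sumSq_lt {u w : ι → Fin d} (hu : Antitone (letterCount u))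
    (hw : Antitone (letterCount w)) (huw : Function.FactorsThrough u w) :
    letterCount u = letterCount w ∨ sumSq (letterCount w) < sumSq (letterCount u) := by
  by_cases hwu : Function.FactorsThrough w u
  · obtain ⟨π, rfl⟩ := exists_perm_comp_eq_of_factorsThrough huw hwu
    have hπ : Antitone (letterCount (π ∘ w) ∘ π) := by rwa [letterCount_perm_comp]
    refine Or.inl ?_
    rw [← letterCount_perm_comp w π]
    exact Tuple.unique_antitone (f := letterCount (π ∘ w)) (σ := 1) hu hπ
  · exact Or.inr (sumSq_letterCount_lt huw hwu)

variable {R : Type*} [CommRing R]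

theorem permChar_apply_ne_zero_iff [CharZero R] {κ : Type*} [Fintype κ] [DecidableEq κ]
    {μ : κ → ℕ} {σ : Equiv.Perm ι} :
    permChar R μ σ ≠ 0 ↔ ∃ w : ι → κ, letterCount w = μ ∧ w ∘ σ = w := by
  rw [permChar_apply, Nat.cast_ne_zero, Nat.card_ne_zero, and_iff_left Subtype.finite,
    nonempty_subtype]

/-- The character of `Perm ι` on the weight space of `(R^d)^⊗ι` whose weight is given by the row
lengths of a diagram with `d` cells. -/
def diagramChar (R ι : Type*) [CommRing R] [Fintype ι] (lam : DiagramOfCard d) :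
    classFunctions R (Equiv.Perm ι) :=
  ⟨permChar R (rows d lam.1), permChar_mem_classFunctions _⟩

theorem linearIndependent_diagramChar [NoZeroDivisors R] [CharZero R] (hι : Fintype.card ι = d) :
    LinearIndependent R (diagramChar R ι (d := d)) := by
  have hsep : ∀ lam : DiagramOfCard d, ∃ w : ι → Fin d,
      letterCount w = rows d lam.1 ∧ ∃ σ : Equiv.Perm ι, ∀ u : ι → Fin d,
        u ∘ σ = u ↔ Function.FactorsThrough u w := by
    intro lam
    obtain ⟨w, hw⟩ := exists_letterCount_eq ((sum_rows lam.2).trans hι.symm)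
    exact ⟨w, hw, exists_perm_comp_eq_iff_factorsThrough w⟩
  choose w hw σ hσ using hsep
  refine LinearIndependent.of_comp (classFunctions R (Equiv.Perm ι)).subtype
    (linearIndependent_of_triangular _ σ (fun lam => sumSq (rows d lam.1)) ?_ ?_)
  · exact fun lam => permChar_apply_ne_zero_iff.2 ⟨w lam, hw lam, (hσ lam _).2 fun _ _ => id⟩
  · intro lam nu hne
    obtain ⟨u, hu, hfix⟩ := permChar_apply_ne_zero_iff.1 hne
    have := letterCount_eq_or_sumSq_lt (hu ▸ antitone_rows d lam.1) (hw nu ▸ antitone_rows d nu.1)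
      ((hσ nu u).1 hfix)
    rw [hu, hw] at this
    exact this.imp_left fun h => Subtype.ext (rows_injOn lam.2 nu.2 h)

instance fintypeDiagrams (d : ℕ) : Fintype (DiagramOfCard d) :=
  have := (linearIndependent_diagramChar (R := ℚ) (Fintype.card_fin d)).finite
  Fintype.ofFinite _

variable {K : Type*} [Field K] [CharZero K]

theorem span_diagramChar (hι : Fintype.card ι = d) :
    Submodule.span K (Set.range (diagramChar K ι (d := d))) = ⊤ := by
  have hli := linearIndependent_diagramChar (R := K) hι
  refine hli.span_eq_top_of_card_eq_finrank' (le_antisymm hli.fintype_card_le_finrank ?_)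
  classical
  exact (finrank_classFunctions_le.trans (card_conjClasses_perm_le hι)).trans_eq
    Nat.card_eq_fintype_card

/-- The basis of the class functions on `Perm ι` given by the characters of the weight spaces. -/
def diagramBasis (K : Type*) [Field K] [CharZero K] (hι : Fintype.card ι = d) :
    Module.Basis (DiagramOfCard d) K (classFunctions K (Equiv.Perm ι)) :=
  Module.Basis.mk (linearIndependent_diagramChar hι) (span_diagramChar hι).ge

theorem coe_diagramBasis (hι : Fintype.card ι = d) :
    ⇑(diagramBasis K hι) = diagramChar K ι :=
  Module.Basis.coe_mk _ _

end DiagramCharacters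

section CutJoinOperator

variable {ι : Type*} [Fintype ι] {d : ℕ}

theorem permChar_eq_zero {R κ : Type*} [CommRing R] [Fintype κ] [DecidableEq κ] {μ : κ → ℕ}
    (hμ : ∑ a, μ a ≠ Fintype.card ι) : (permChar R μ : Equiv.Perm ι → R) = 0 := by
  ext σ
  have : IsEmpty {w : ι → κ // letterCount w = μ ∧ w ∘ σ = w} :=
    ⟨fun w => hμ (w.2.1 ▸ sum_letterCount w.1)⟩
  simp [permChar_apply]

theorem comap_higherSpan_le_span_diagramChar {R : Type*} [CommRing R] (hι : Fintype.card ι = d)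
    (s : ℕ) : (higherSpan R ι (Fin d) s).comap (classFunctions R (Equiv.Perm ι)).subtype ≤
      Submodule.span R (diagramChar R ι '' {lam : DiagramOfCard d | s < sumSq (rows d lam.1)}) := by
  rw [← Submodule.comap_map_eq_of_injective (Submodule.subtype_injective _) (Submodule.span _ _)]
  refine Submodule.comap_mono (Submodule.span_le.2 ?_)
  rintro _ ⟨μ, hμs : s < sumSq μ, rfl⟩
  by_cases hμ : ∑ a, μ a = Fintype.card ι
  · obtain ⟨lam, hlam, π, hπ⟩ := exists_rows_eq_comp_perm (hμ.trans hι)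
    refine ⟨diagramChar R ι ⟨lam, hlam⟩, Submodule.subset_span ⟨_, ?_, rfl⟩, ?_⟩
    · simpa [hπ, sumSq_comp_perm] using hμs
    · simp [diagramChar, hπ, permChar_comp_perm]
  · rw [permChar_eq_zero hμ]
    exact Submodule.zero_mem _

variable [DecidableEq ι]

/-- The cut-and-join operator: the action of the sum of all transpositions on class functions. -/
def cutJoin (R ι : Type*) [CommRing R] [Fintype ι] [DecidableEq ι] :
    Module.End R (classFunctions R (Equiv.Perm ι)) :=
  (sumTranslates R (transpositions ι)).restrict
    fun _ => sumTranslates_mem_classFunctions conj_mem_transpositions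

variable {K : Type*} [Field K] [CharZero K]

theorem cutJoin_diagramChar_sub_mem (hι : Fintype.card ι = d)
    (lam : DiagramOfCard d) :
    cutJoin K ι (diagramChar K ι lam) - (∑ c ∈ lam.1.cells, (content c : K)) • diagramChar K ι lam ∈
      Submodule.span K (diagramChar K ι ''
        {nu : DiagramOfCard d | sumSq (rows d lam.1) < sumSq (rows d nu.1)}) := by
  have hcoeff : ∑ a, ∑ b, (polarCoeff (rows d lam.1) a b : K) -
      Fintype.card (Fin d) * Fintype.card ι = 2 * ∑ c ∈ lam.1.cells, (content c : K) := by
    rw [Fintype.card_fin, hι, sub_eq_iff_eq_add]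
    exact_mod_cast congrArg (Int.cast (R := K)) (sum_sum_polarCoeff_rows lam.2)
  have htri := two_smul_sumTranslates_permChar_sub_mem (R := K) (ι := ι) (rows d lam.1)
  rw [hcoeff, mul_smul, ← smul_sub, Submodule.smul_mem_iff _ two_ne_zero] at htri
  exact comap_higherSpan_le_span_diagramChar hι _ htri

theorem trace_cutJoin_pow (hι : Fintype.card ι = d) (n : ℕ) :
    LinearMap.trace K _ (cutJoin K ι ^ n) =
      ∑ lam : DiagramOfCard d, (∑ c ∈ lam.1.cells, (content c : K)) ^ n :=
  trace_pow_eq_sum_pow_of_triangular (diagramBasis K hι) _ (fun lam => sumSq (rows d lam.1)) _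
    (fun lam => by simpa only [coe_diagramBasis] using cutJoin_diagramChar_sub_mem hι lam) n

end CutJoinOperator

end CutJoin

open CutJoin in
theorem card_factorizations_eq_content_power_sum_general {K : Type*} [Field K] [CharZero K]
    {ι : Type*} [Fintype ι] [DecidableEq ι] {d : ℕ} (hι : Fintype.card ι = d) (n : ℕ) :
    (Nat.card {c : Equiv.Perm ι × Equiv.Perm ι × (Fin n → Equiv.Perm ι) //
        c.1 * c.2.1 * c.1⁻¹ * c.2.1⁻¹ * (List.ofFn c.2.2).prod = 1 ∧
        ∀ i, (c.2.2 i).IsSwap} : K) =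
      d.factorial * ∑ lam : DiagramOfCard d, (∑ c ∈ lam.1.cells, (content c : K)) ^ n := by
  simp only [← mem_transpositions]
  rw [card_commutator_factorizations conj_mem_transpositions, Fintype.card_perm, hι]
  exact congrArg _ (trace_cutJoin_pow hι n)

/-- The number of tuples `(π₁, π₂, τ₁, …, τ_{2g−2})` of permutations of `{1,…,d}` with
`π₁π₂π₁⁻¹π₂⁻¹τ₁⋯τ_{2g−2}` the identity and each `τ_i` a transposition (no monotonicity or
transitivity constraint) equals `d! · Σ_{λ ∈ Y^d} (Σ_{□ ∈ λ} c(□))^(2g−2)`. -/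
theorem card_factorizations_eq_content_power_sum (g d : ℕ) (hg : 1 ≤ g) (hd : 1 ≤ d) :
    (Nat.card
      {c : Equiv.Perm (Fin d) × Equiv.Perm (Fin d) × (Fin (2 * g - 2) → Equiv.Perm (Fin d)) //
        c.1 * c.2.1 * c.1⁻¹ * c.2.1⁻¹ * (List.ofFn c.2.2).prod = 1 ∧
        (∀ i, (c.2.2 i).IsSwap)} : ℝ) =
      (Nat.factorial d) * ∑' lam : {lam : YoungDiagram // lam.card = d},
        (∑ c ∈ lam.1.cells, (content c : ℝ)) ^ (2 * g - 2) := by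
  simpa only [tsum_fintype] using
    card_factorizations_eq_content_power_sum_general (K := ℝ) (Fintype.card_fin d) (2 * g - 2)
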